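/- (Abstract form of Theorem 1.) Let H be a real Hilbert space, V a closed linear subspace of H, and I, J : H → ℝ Fréchet differentiable functionals whose gradients ∇I and ∇J are Lipschitz with constants ν and L respectively, where 0 ≤ ν < 2 and L > 0. Assume I(u) ≥ 0 for all u ∈ H, I(0) = 0, and there exists v₀ ∈ V with ⟨∇J(0), v₀⟩ ≠ 0. Let S be the set of global minima over V of u ↦ ‖u‖² + I(u) + ((2 − ν)/L) J(u). Then δ := inf_{u ∈ S} (‖u‖² + I(u)) > 0 (with inf ∅ = +∞), and for each real r with 0 < r < δ, the restriction of J to the set C_r := { u ∈ V : ‖u‖² + I(u) = r } has a unique global minimum. -/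

import Mathlib

open scoped RealInnerProductSpace

/-!
For `0 ≤ l < m / L` the penalized functional `Φ + l J` is strongly convex, since `J` is convex up to
the term `L / 2 * ‖·‖ ^ 2`, so it has a unique minimizer `x l` over `V`, which depends continuously
on `l`. When `l > 0`, the point `x l` is the only minimizer of `J` on its own level set of `Φ`, so
it remains to reach the prescribed level `r`. The curve starts at the minimizer of `Φ`, below `r`.
If `Φ (x l)` stayed below `r`, then, being monotone in `l`, it would converge as `l ↑ m / L`;
because `m / 2 * ‖x k - x l‖ ^ 2 ≤ Φ (x k) - Φ (x l)` the curve would converge too, and its limit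
would be a minimizer at the critical parameter with `Φ ≤ r < δ`, which is absurd.
-/

open Filter Topology Set

section StrongConvexity

variable {E : Type*} [NormedAddCommGroup E] [NormedSpace ℝ E] {s : Set E} {f g : E → ℝ} {m n : ℝ}

theorem strongConvexOn_add (hf : StrongConvexOn s m f) (hg : StrongConvexOn s n g) :
    StrongConvexOn s (m + n) fun x ↦ f x + g x := by
  refine UniformConvexOn.mono (fun r ↦ ?_) (UniformConvexOn.add hf hg)
  simp only [Pi.add_apply]
  linarith

theorem strongConvexOn_const_mul (hf : StrongConvexOn s m f) {l : ℝ} (hl : 0 ≤ l) :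
    StrongConvexOn s (l * m) fun x ↦ l * f x := by
  refine ⟨hf.1, fun x hx y hy a b ha hb hab ↦ ?_⟩
  have h := mul_le_mul_of_nonneg_left (hf.2 hx hy ha hb hab) hl
  simp only [smul_eq_mul] at h ⊢
  linarith

theorem add_mul_sq_norm_sub_le_of_isMinOn (hf : StrongConvexOn s m f) {u v : E} (hu : u ∈ s)
    (hmin : IsMinOn f s u) (hv : v ∈ s) : f u + m / 2 * ‖v - u‖ ^ 2 ≤ f v := by
  have hseg : ∀ t ∈ Ioo (0 : ℝ) 1, f u + (1 - t) * (m / 2 * ‖v - u‖ ^ 2) ≤ f v := by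
    rintro t ⟨ht0, ht1⟩
    have hab : t + (1 - t) = 1 := add_sub_cancel t 1
    have h := (isMinOn_iff.1 hmin _ (hf.1 hv hu ht0.le (sub_nonneg.2 ht1.le) hab)).trans
      (hf.2 hv hu ht0.le (sub_nonneg.2 ht1.le) hab)
    simp only [smul_eq_mul] at h
    refine le_of_mul_le_mul_left ?_ ht0
    linarith
  have hlim : Tendsto (fun t : ℝ ↦ f u + (1 - t) * (m / 2 * ‖v - u‖ ^ 2)) (𝓝[>] 0)
      (𝓝 (f u + (1 - 0) * (m / 2 * ‖v - u‖ ^ 2))) :=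
    (Continuous.tendsto (by fun_prop) 0).mono_left nhdsWithin_le_nhds
  rw [sub_zero, one_mul] at hlim
  exact le_of_tendsto hlim (eventually_of_mem (Ioo_mem_nhdsGT one_pos) hseg)

theorem apply_midpoint_le_of_strongConvexOn (hf : StrongConvexOn s m f) {u v : E} (hu : u ∈ s)
    (hv : v ∈ s) : f (midpoint ℝ u v) ≤ (f u + f v) / 2 - m / 8 * ‖u - v‖ ^ 2 := by
  have h := hf.2 hu hv (by norm_num : (0 : ℝ) ≤ 2⁻¹) (by norm_num : (0 : ℝ) ≤ 2⁻¹) (by norm_num)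
  rw [midpoint_eq_smul_add, invOf_eq_inv, smul_add]
  simp only [smul_eq_mul] at h
  linarith

theorem bddBelow_image_of_strongConvexOn (hm : 0 < m) (hf : StrongConvexOn s m f)
    (hs : IsClosed s) (hfc : LowerSemicontinuousOn f s) : BddBelow (f '' s) := by
  rcases s.eq_empty_or_nonempty with rfl | ⟨u, hu⟩
  · simp
  obtain ⟨φ, c, hφ, -⟩ := ConvexOn.exists_affine_le_of_lt (𝕜 := ℝ) hu (sub_one_lt (f u)) hs hfc
    (hf.convexOn fun r ↦ by positivity)
  refine ⟨2 * (φ u + c) - f u - ‖φ‖ ^ 2 / m, ?_⟩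
  rintro _ ⟨v, hv, rfl⟩
  have hmid : φ (midpoint ℝ u v) + c ≤ (f u + f v) / 2 - m / 8 * ‖u - v‖ ^ 2 :=
    (hφ ⟨_, hf.1.midpoint_mem hu hv⟩).trans (apply_midpoint_le_of_strongConvexOn hf hu hv)
  rw [midpoint_eq_smul_add, invOf_eq_inv, map_smul, map_add, smul_eq_mul] at hmid
  have hφuv : φ u - φ v ≤ ‖φ‖ * ‖u - v‖ := by
    simpa using (le_abs_self _).trans (φ.le_opNorm (u - v))
  have hyoung : ‖φ‖ * ‖u - v‖ ≤ ‖φ‖ ^ 2 / m + m / 4 * ‖u - v‖ ^ 2 := by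
    have hsq : ‖φ‖ ^ 2 / m + m / 4 * ‖u - v‖ ^ 2 - ‖φ‖ * ‖u - v‖ =
        (‖φ‖ - m / 2 * ‖u - v‖) ^ 2 / m := by
      field_simp
      ring
    exact sub_nonneg.1 (hsq ▸ by positivity)
  linarith

theorem exists_tendsto_of_sq_dist_le {ι X : Type*} [PseudoMetricSpace X] [CompleteSpace X]
    {𝓕 : Filter ι} [𝓕.NeBot] {x : ι → X} {ε : ι → ℝ} (hε : Tendsto ε 𝓕 (𝓝 0))
    (hx : ∀ᶠ p in 𝓕 ×ˢ 𝓕, dist (x p.1) (x p.2) ^ 2 ≤ ε p.1 + ε p.2) :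
    ∃ w, Tendsto x 𝓕 (𝓝 w) := by
  have hsum : Tendsto (fun p : ι × ι ↦ ε p.1 + ε p.2) (𝓕 ×ˢ 𝓕) (𝓝 0) := by
    simpa using (hε.comp tendsto_fst).add (hε.comp tendsto_snd)
  have hsq := squeeze_zero' (Eventually.of_forall fun _ ↦ sq_nonneg _) hx hsum
  have hdist : Tendsto (fun p : ι × ι ↦ dist (x p.1) (x p.2)) (𝓕 ×ˢ 𝓕) (𝓝 0) := by
    simpa [Real.sqrt_sq dist_nonneg] using hsq.sqrt
  refine CompleteSpace.complete (cauchy_map_iff.2 ⟨‹_›, ?_⟩)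
  exact tendsto_uniformity_iff_dist_tendsto_zero.2 hdist

theorem exists_isMinOn_of_strongConvexOn [CompleteSpace E] (hm : 0 < m) (hf : StrongConvexOn s m f)
    (hs : IsClosed s) (hne : s.Nonempty) (hfc : LowerSemicontinuousOn f s) :
    ∃ u ∈ s, IsMinOn f s u := by
  have hbdd := bddBelow_image_of_strongConvexOn hm hf hs hfc
  set i := sInf (f '' s)
  have hi : ∀ v ∈ s, i ≤ f v := fun v hv ↦ csInf_le hbdd (mem_image_of_mem f hv)
  obtain ⟨y, -, hyi, hy⟩ := exists_seq_tendsto_sInf (hne.image f) hbdd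
  choose x hxs hxy using hy
  have hxi : Tendsto (fun k ↦ f (x k)) atTop (𝓝 i) := by simpa only [hxy] using hyi
  have hmid : ∀ a ∈ s, ∀ b ∈ s, dist a b ^ 2 ≤ 4 / m * (f a - i) + 4 / m * (f b - i) := by
    intro a ha b hb
    have h := (hi _ (hf.1.midpoint_mem ha hb)).trans (apply_midpoint_le_of_strongConvexOn hf ha hb)
    rw [dist_eq_norm, ← mul_add, div_mul_eq_mul_div, le_div_iff₀ hm]
    linarith
  obtain ⟨u, hxu⟩ := exists_tendsto_of_sq_dist_le (𝓕 := atTop) (x := x)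
    (ε := fun k ↦ 4 / m * (f (x k) - i)) (by simpa using (hxi.sub_const i).const_mul (4 / m))
    (Eventually.of_forall fun p ↦ hmid _ (hxs p.1) _ (hxs p.2))
  have hu : u ∈ s := hs.mem_of_tendsto hxu (Eventually.of_forall hxs)
  have hxu' : Tendsto x atTop (𝓝[s] u) :=
    tendsto_nhdsWithin_iff.2 ⟨hxu, Eventually.of_forall hxs⟩
  have hui : f u ≤ i := le_of_forall_lt_imp_le_of_dense fun c hc ↦
    ge_of_tendsto hxi ((hxu'.eventually (hfc u hu c hc)).mono fun _ ↦ le_of_lt)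
  exact ⟨u, hu, fun v hv ↦ hui.trans (hi v hv)⟩

theorem lt_iInf_of_isMinOn_of_notMem (hm : 0 < m) (hf : StrongConvexOn s m f) {z : E} (hz : z ∈ s)
    (hmin : IsMinOn f s z) {S : Set E} (hS : IsClosed S) (hSs : S ⊆ s) (hzS : z ∉ S) :
    (f z : EReal) < ⨅ u ∈ S, (f u : EReal) := by
  obtain ⟨ε, hε, hball⟩ := Metric.isOpen_iff.1 hS.isOpen_compl z hzS
  have hlb : ∀ u ∈ S, f z + m / 2 * ε ^ 2 ≤ f u := by
    intro u hu
    have hεu : ε ≤ ‖u - z‖ := not_lt.1 fun h ↦ hball (mem_ball_iff_norm.2 h) hu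
    calc f z + m / 2 * ε ^ 2 ≤ f z + m / 2 * ‖u - z‖ ^ 2 := by gcongr
      _ ≤ f u := add_mul_sq_norm_sub_le_of_isMinOn hf hz hmin (hSs hu)
  calc (f z : EReal) < ((f z + m / 2 * ε ^ 2 : ℝ) : EReal) :=
        EReal.coe_lt_coe_iff.2 (lt_add_of_pos_right _ (by positivity))
    _ ≤ ⨅ u ∈ S, (f u : EReal) := le_iInf₂ fun u hu ↦ EReal.coe_le_coe_iff.2 (hlb u hu)

end StrongConvexity

section Penalization

variable {X : Type*} {V : Set X} {Φ J : X → ℝ} {l k : ℝ} {u w : X}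

/-- The minimizers over `V` of the penalized functional `Φ + l J`, the parameter `l` being the
reciprocal of a Lagrange multiplier for minimizing `J` on a level set of `Φ`. -/
def penalizedArgmin (V : Set X) (Φ J : X → ℝ) (l : ℝ) : Set X :=
  {u ∈ V | IsMinOn (fun v ↦ Φ v + l * J v) V u}

theorem mem_penalizedArgmin_iff :
    u ∈ penalizedArgmin V Φ J l ↔ u ∈ V ∧ ∀ v ∈ V, Φ u + l * J u ≤ Φ v + l * J v :=
  Iff.rfl

theorem le_of_mem_penalizedArgmin_of_lt (hlk : l < k) (hu : u ∈ penalizedArgmin V Φ J l)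
    (hw : w ∈ penalizedArgmin V Φ J k) : J w ≤ J u := by
  rw [mem_penalizedArgmin_iff] at hu hw
  refine le_of_mul_le_mul_left ?_ (sub_pos.2 hlk)
  linarith [hu.2 w hw.1, hw.2 u hu.1]

theorem antitoneOn_of_mem_penalizedArgmin {T : Set ℝ} {x : ℝ → X}
    (hx : ∀ l ∈ T, x l ∈ penalizedArgmin V Φ J l) : AntitoneOn (fun l ↦ J (x l)) T := by
  intro l hl k hk hlk
  rcases hlk.eq_or_lt with rfl | hlk
  · exact le_rfl
  · exact le_of_mem_penalizedArgmin_of_lt hlk (hx l hl) (hx k hk)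

theorem existsUnique_isMinOn_level_of_mem_penalizedArgmin (hl : 0 < l)
    (hu : u ∈ penalizedArgmin V Φ J l) (huniq : (penalizedArgmin V Φ J l).Subsingleton) :
    ∃! w, (w ∈ V ∧ Φ w = Φ u) ∧ ∀ v, v ∈ V ∧ Φ v = Φ u → J w ≤ J v := by
  rw [mem_penalizedArgmin_iff] at hu
  refine ⟨u, ⟨⟨hu.1, rfl⟩, fun v hv ↦ ?_⟩, fun w hw ↦ huniq ?_ hu⟩
  · refine le_of_mul_le_mul_left ?_ hl
    linarith [hu.2 v hv.1, hv.2]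
  · have hwu : l * J w ≤ l * J u := mul_le_mul_of_nonneg_left (hw.2 u ⟨hu.1, rfl⟩) hl.le
    exact mem_penalizedArgmin_iff.2 ⟨hw.1.1, fun v hv ↦ by linarith [hu.2 v hv, hw.1.2]⟩

theorem mem_penalizedArgmin_of_tendsto [TopologicalSpace X] (hV : IsClosed V)
    (hΦ : ContinuousOn Φ V) (hJ : ContinuousOn J V) {ι : Type*} {𝓕 : Filter ι} [𝓕.NeBot]
    {p : ι → ℝ} {x : ι → X} (hp : Tendsto p 𝓕 (𝓝 l)) (hx : Tendsto x 𝓕 (𝓝 u))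
    (hmem : ∀ᶠ i in 𝓕, x i ∈ penalizedArgmin V Φ J (p i)) : u ∈ penalizedArgmin V Φ J l := by
  have hxV : ∀ᶠ i in 𝓕, x i ∈ V := hmem.mono fun _ h ↦ h.1
  have hu : u ∈ V := hV.mem_of_tendsto hx hxV
  have hxu : Tendsto x 𝓕 (𝓝[V] u) := tendsto_nhdsWithin_iff.2 ⟨hx, hxV⟩
  refine mem_penalizedArgmin_iff.2 ⟨hu, fun v hv ↦ ?_⟩
  exact le_of_tendsto_of_tendsto (((hΦ u hu).tendsto.comp hxu).add
    (hp.mul ((hJ u hu).tendsto.comp hxu))) ((hp.mul_const (J v)).const_add (Φ v))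
    (hmem.mono fun _ h ↦ h.2 hv)

theorem isClosed_penalizedArgmin [TopologicalSpace X] (hV : IsClosed V)
    (hΦ : ContinuousOn Φ V) (hJ : ContinuousOn J V) : IsClosed (penalizedArgmin V Φ J l) := by
  refine isClosed_of_closure_subset fun u hu ↦ ?_
  have : (𝓝[penalizedArgmin V Φ J l] u).NeBot := mem_closure_iff_nhdsWithin_neBot.1 hu
  exact mem_penalizedArgmin_of_tendsto (𝓕 := 𝓝[penalizedArgmin V Φ J l] u) hV hΦ hJ
    tendsto_const_nhds nhdsWithin_le_nhds self_mem_nhdsWithin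

end Penalization

section StronglyConvexPenalization

variable {E : Type*} [NormedAddCommGroup E] [NormedSpace ℝ E] {V : Set E} {Φ J : E → ℝ}
  {m L l k r : ℝ} {u v w : E}

theorem strongConvexOn_penalized (hΦ : StrongConvexOn V m Φ) (hJ : StrongConvexOn V (-L) J)
    (hl : 0 ≤ l) : StrongConvexOn V (m - l * L) fun v ↦ Φ v + l * J v := by
  simpa only [mul_neg, ← sub_eq_add_neg] using
    strongConvexOn_add hΦ (strongConvexOn_const_mul hJ hl)

theorem add_mul_sq_norm_sub_le_of_mem_penalizedArgmin (hΦ : StrongConvexOn V m Φ)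
    (hJ : StrongConvexOn V (-L) J) (hl : 0 ≤ l) (hu : u ∈ penalizedArgmin V Φ J l) (hv : v ∈ V) :
    Φ u + l * J u + (m - l * L) / 2 * ‖v - u‖ ^ 2 ≤ Φ v + l * J v :=
  add_mul_sq_norm_sub_le_of_isMinOn (strongConvexOn_penalized hΦ hJ hl) hu.1 hu.2 hv

theorem subsingleton_penalizedArgmin (hΦ : StrongConvexOn V m Φ) (hJ : StrongConvexOn V (-L) J)
    (hl : 0 ≤ l) (hlL : l * L < m) : (penalizedArgmin V Φ J l).Subsingleton := fun _ hu _ hw ↦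
  ((strongConvexOn_penalized hΦ hJ hl).strictConvexOn (sub_pos.2 hlL)).eq_of_isMinOn
    hu.2 hw.2 hu.1 hw.1

theorem nonempty_penalizedArgmin [CompleteSpace E] (hV : IsClosed V) (hne : V.Nonempty)
    (hΦ : StrongConvexOn V m Φ) (hJ : StrongConvexOn V (-L) J) (hΦc : ContinuousOn Φ V)
    (hJc : ContinuousOn J V) (hl : 0 ≤ l) (hlL : l * L < m) :
    (penalizedArgmin V Φ J l).Nonempty :=
  exists_isMinOn_of_strongConvexOn (sub_pos.2 hlL) (strongConvexOn_penalized hΦ hJ hl) hV hne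
    (hΦc.add (continuousOn_const.mul hJc)).lowerSemicontinuousOn

theorem mul_sq_norm_sub_le_sub_of_mem_penalizedArgmin (hΦ : StrongConvexOn V m Φ)
    (hJ : StrongConvexOn V (-L) J) (hl : 0 ≤ l) (hlk : l < k) (hk : k * L ≤ m)
    (hu : u ∈ penalizedArgmin V Φ J l) (hw : w ∈ penalizedArgmin V Φ J k) :
    m / 2 * ‖w - u‖ ^ 2 ≤ Φ w - Φ u := by
  have hkl := mul_le_mul_of_nonneg_left
    (add_mul_sq_norm_sub_le_of_mem_penalizedArgmin hΦ hJ hl hu hw.1) (hl.trans hlk.le)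
  have hlk' := mul_le_mul_of_nonneg_left
    (add_mul_sq_norm_sub_le_of_mem_penalizedArgmin hΦ hJ (hl.trans hlk.le) hw hu.1) hl
  have hslack : 0 ≤ l * (m - k * L) * ‖w - u‖ ^ 2 :=
    mul_nonneg (mul_nonneg hl (sub_nonneg.2 hk)) (sq_nonneg _)
  rw [norm_sub_rev u w] at hlk'
  refine le_of_mul_le_mul_left ?_ (sub_pos.2 hlk)
  linarith

theorem mul_sq_norm_sub_le_mul_sub_of_mem_penalizedArgmin (hΦ : StrongConvexOn V m Φ)
    (hJ : StrongConvexOn V (-L) J) (hl : 0 ≤ l) (hu : u ∈ penalizedArgmin V Φ J l)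
    (hw : w ∈ penalizedArgmin V Φ J k) :
    (m - l * L) / 2 * ‖w - u‖ ^ 2 ≤ (k - l) * (J u - J w) := by
  have hgrowth := add_mul_sq_norm_sub_le_of_mem_penalizedArgmin hΦ hJ hl hu hw.1
  have hmin := (mem_penalizedArgmin_iff.1 hw).2 u hu.1
  linarith

variable {x : ℝ → E}

theorem continuousOn_of_mem_penalizedArgmin (hL : 0 < L) (hΦ : StrongConvexOn V m Φ)
    (hJ : StrongConvexOn V (-L) J) (hx : ∀ l ∈ Ico 0 (m / L), x l ∈ penalizedArgmin V Φ J l) :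
    ContinuousOn x (Ico 0 (m / L)) := by
  have hanti : AntitoneOn (fun l ↦ J (x l)) (Ico 0 (m / L)) :=
    antitoneOn_of_mem_penalizedArgmin hx
  intro l hl
  obtain ⟨q, hlq, hqc⟩ := exists_between hl.2
  have hq : q ∈ Ico 0 (m / L) := ⟨hl.1.trans hlq.le, hqc⟩
  have h0 : (0 : ℝ) ∈ Ico 0 (m / L) := ⟨le_rfl, hl.1.trans_lt hl.2⟩
  have hpos : 0 < (m - l * L) / 2 := half_pos (sub_pos.2 ((lt_div_iff₀ hL).1 hl.2))
  have hbound : ∀ k ∈ Ico 0 (m / L), k < q →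
      dist (x k) (x l) ^ 2 ≤ |k - l| * (J (x 0) - J (x q)) / ((m - l * L) / 2) := by
    intro k hk hkq
    have hJkl : |J (x l) - J (x k)| ≤ J (x 0) - J (x q) :=
      abs_sub_le_of_le_of_le (hanti hl hq hlq.le) (hanti h0 hl hl.1)
        (hanti hk hq hkq.le) (hanti h0 hk hk.1)
    rw [dist_eq_norm, le_div_iff₀' hpos]
    calc (m - l * L) / 2 * ‖x k - x l‖ ^ 2 ≤ (k - l) * (J (x l) - J (x k)) :=
          mul_sq_norm_sub_le_mul_sub_of_mem_penalizedArgmin hΦ hJ hl.1 (hx l hl) (hx k hk)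
      _ ≤ |k - l| * |J (x l) - J (x k)| := (le_abs_self _).trans (abs_mul _ _).le
      _ ≤ |k - l| * (J (x 0) - J (x q)) := by gcongr
  have hlim : Tendsto (fun k : ℝ ↦ |k - l| * (J (x 0) - J (x q)) / ((m - l * L) / 2))
      (𝓝[Ico 0 (m / L)] l) (𝓝 0) := by
    have hcont : Continuous fun k : ℝ ↦ |k - l| * (J (x 0) - J (x q)) / ((m - l * L) / 2) := by
      fun_prop
    simpa using (hcont.tendsto l).mono_left nhdsWithin_le_nhds
  have hsq : Tendsto (fun k ↦ dist (x k) (x l) ^ 2) (𝓝[Ico 0 (m / L)] l) (𝓝 0) := by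
    refine squeeze_zero' (Eventually.of_forall fun _ ↦ sq_nonneg _) ?_ hlim
    filter_upwards [self_mem_nhdsWithin, mem_nhdsWithin_of_mem_nhds (Iio_mem_nhds hlq)]
      using hbound
  exact tendsto_iff_dist_tendsto_zero.2 (by simpa [Real.sqrt_sq dist_nonneg] using hsq.sqrt)

theorem exists_tendsto_nhdsLT_of_mem_penalizedArgmin [CompleteSpace E] (hm : 0 < m) (hL : 0 < L)
    (hΦ : StrongConvexOn V m Φ) (hJ : StrongConvexOn V (-L) J)
    (hx : ∀ l ∈ Ico 0 (m / L), x l ∈ penalizedArgmin V Φ J l)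
    (hr : ∀ l ∈ Ico 0 (m / L), Φ (x l) ≤ r) : ∃ w, Tendsto x (𝓝[<] (m / L)) (𝓝 w) := by
  have hc : 0 < m / L := div_pos hm hL
  have hstep : ∀ l ∈ Ioo 0 (m / L), ∀ k ∈ Ioo 0 (m / L), l ≤ k →
      m / 2 * dist (x k) (x l) ^ 2 ≤ Φ (x k) - Φ (x l) := by
    intro l hl k hk hlk
    rcases hlk.eq_or_lt with rfl | hlk
    · simp
    · rw [dist_eq_norm]
      exact mul_sq_norm_sub_le_sub_of_mem_penalizedArgmin hΦ hJ hl.1.le hlk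
        ((lt_div_iff₀ hL).1 hk.2).le (hx l ⟨hl.1.le, hl.2⟩) (hx k ⟨hk.1.le, hk.2⟩)
  have hmono : MonotoneOn (fun l ↦ Φ (x l)) (Ioo 0 (m / L)) := fun l hl k hk hlk ↦
    sub_nonneg.1 ((by positivity : 0 ≤ m / 2 * dist (x k) (x l) ^ 2).trans (hstep l hl k hk hlk))
  set lim := sSup ((fun l ↦ Φ (x l)) '' Ioo 0 (m / L))
  have hlim : Tendsto (fun l ↦ Φ (x l)) (𝓝[<] (m / L)) (𝓝 lim) :=
    hmono.tendsto_nhdsWithin_Ioo_left (nonempty_Ioo.2 hc)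
      ⟨r, by rintro _ ⟨l, hl, rfl⟩; exact hr l ⟨hl.1.le, hl.2⟩⟩
  have hdist : ∀ l ∈ Ioo 0 (m / L), ∀ k ∈ Ioo 0 (m / L),
      dist (x l) (x k) ^ 2 ≤ 2 / m * |Φ (x l) - lim| + 2 / m * |Φ (x k) - lim| := by
    intro l hl k hk
    have habs : m / 2 * dist (x l) (x k) ^ 2 ≤ |Φ (x l) - Φ (x k)| := by
      rcases le_total l k with hlk | hkl
      · rw [dist_comm, abs_sub_comm]
        exact (hstep l hl k hk hlk).trans (le_abs_self _)
      · exact (hstep k hk l hl hkl).trans (le_abs_self _)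
    have htri := habs.trans (abs_sub_le _ lim _)
    rw [abs_sub_comm lim] at htri
    rw [← mul_add, div_mul_eq_mul_div, le_div_iff₀ hm]
    linarith
  refine exists_tendsto_of_sq_dist_le (ε := fun l ↦ 2 / m * |Φ (x l) - lim|)
    (by simpa using ((hlim.sub_const lim).abs.const_mul (2 / m))) ?_
  filter_upwards [prod_mem_prod (Ioo_mem_nhdsLT hc) (Ioo_mem_nhdsLT hc)] with p hp
  exact hdist _ hp.1 _ hp.2

theorem exists_mem_penalizedArgmin_div_of_forall_le [CompleteSpace E] (hV : IsClosed V)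
    (hm : 0 < m) (hL : 0 < L) (hΦ : StrongConvexOn V m Φ) (hJ : StrongConvexOn V (-L) J)
    (hΦc : ContinuousOn Φ V) (hJc : ContinuousOn J V)
    (hx : ∀ l ∈ Ico 0 (m / L), x l ∈ penalizedArgmin V Φ J l)
    (hr : ∀ l ∈ Ico 0 (m / L), Φ (x l) ≤ r) : ∃ w ∈ penalizedArgmin V Φ J (m / L), Φ w ≤ r := by
  obtain ⟨w, hw⟩ := exists_tendsto_nhdsLT_of_mem_penalizedArgmin hm hL hΦ hJ hx hr
  have hIco : ∀ᶠ l in 𝓝[<] (m / L), l ∈ Ico 0 (m / L) := Ico_mem_nhdsLT (div_pos hm hL)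
  have hmem : ∀ᶠ l in 𝓝[<] (m / L), x l ∈ penalizedArgmin V Φ J l := hIco.mono hx
  have hwS : w ∈ penalizedArgmin V Φ J (m / L) :=
    mem_penalizedArgmin_of_tendsto hV hΦc hJc (tendsto_id.mono_left nhdsWithin_le_nhds) hw hmem
  have hwV : Tendsto x (𝓝[<] (m / L)) (𝓝[V] w) :=
    tendsto_nhdsWithin_iff.2 ⟨hw, hmem.mono fun _ h ↦ h.1⟩
  exact ⟨w, hwS, le_of_tendsto ((hΦc w hwS.1).tendsto.comp hwV) (hIco.mono hr)⟩

theorem exists_mem_penalizedArgmin_eq [CompleteSpace E] (hV : IsClosed V) (hm : 0 < m)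
    (hL : 0 < L) (hΦ : StrongConvexOn V m Φ) (hJ : StrongConvexOn V (-L) J)
    (hΦc : ContinuousOn Φ V) (hJc : ContinuousOn J V) (hv : v ∈ V) (hvr : Φ v < r)
    (hr : ∀ w ∈ penalizedArgmin V Φ J (m / L), r < Φ w) :
    ∃ l ∈ Ioo 0 (m / L), ∃ u ∈ penalizedArgmin V Φ J l, Φ u = r := by
  have hex : ∀ l ∈ Ico 0 (m / L), (penalizedArgmin V Φ J l).Nonempty := fun l hl ↦
    nonempty_penalizedArgmin hV ⟨v, hv⟩ hΦ hJ hΦc hJc hl.1 ((lt_div_iff₀ hL).1 hl.2)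
  choose! x hx using hex
  have h0 : Φ (x 0) < r := by
    have h := (mem_penalizedArgmin_iff.1 (hx 0 ⟨le_rfl, div_pos hm hL⟩)).2 v hv
    simp only [zero_mul, add_zero] at h
    exact h.trans_lt hvr
  obtain ⟨q, hq, hrq⟩ : ∃ q ∈ Ico 0 (m / L), r < Φ (x q) := by
    by_contra! hle
    obtain ⟨w, hw, hwr⟩ :=
      exists_mem_penalizedArgmin_div_of_forall_le hV hm hL hΦ hJ hΦc hJc hx hle
    exact (hr w hw).not_ge hwr
  have hcont : ContinuousOn (fun l ↦ Φ (x l)) (Icc 0 q) :=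
    (hΦc.comp (continuousOn_of_mem_penalizedArgmin hL hΦ hJ hx) fun l hl ↦ (hx l hl).1).mono
      (Icc_subset_Ico_right hq.2)
  obtain ⟨l, hl, hlr⟩ := intermediate_value_Icc hq.1 hcont ⟨h0.le, hrq.le⟩
  have hlpos : 0 < l := hl.1.lt_of_ne (by rintro rfl; exact h0.ne hlr)
  have hlc : l < m / L := hl.2.trans_lt hq.2
  exact ⟨l, ⟨hlpos, hlc⟩, x l, hx l ⟨hlpos.le, hlc⟩, hlr⟩

end StronglyConvexPenalization

theorem abstract_theorem_one_general {E : Type*} [NormedAddCommGroup E] [NormedSpace ℝ E]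
    [CompleteSpace E] {V : Set E} (hV : IsClosed V) {Φ J : E → ℝ} {m L : ℝ} (hm : 0 < m)
    (hL : 0 < L) (hΦ : StrongConvexOn V m Φ) (hJ : StrongConvexOn V (-L) J)
    (hΦc : ContinuousOn Φ V) (hJc : ContinuousOn J V) {z : E} (hzV : z ∈ V)
    (hzmin : IsMinOn Φ V z) (hz : z ∉ penalizedArgmin V Φ J (m / L)) :
    (Φ z : EReal) < ⨅ u ∈ penalizedArgmin V Φ J (m / L), (Φ u : EReal) ∧
    ∀ r : ℝ, Φ z < r → (r : EReal) < ⨅ u ∈ penalizedArgmin V Φ J (m / L), (Φ u : EReal) →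
      ∃! w : E, (w ∈ V ∧ Φ w = r) ∧ ∀ u, u ∈ V ∧ Φ u = r → J w ≤ J u := by
  refine ⟨lt_iInf_of_isMinOn_of_notMem hm hΦ hzV hzmin (isClosed_penalizedArgmin hV hΦc hJc)
    (fun _ hu ↦ hu.1) hz, fun r hzr hr ↦ ?_⟩
  obtain ⟨l, hl, u, hu, rfl⟩ := exists_mem_penalizedArgmin_eq hV hm hL hΦ hJ hΦc hJc hzV hzr
    fun w hw ↦ EReal.coe_lt_coe_iff.1 (hr.trans_le (iInf₂_le w hw))
  exact existsUnique_isMinOn_level_of_mem_penalizedArgmin hl.1 hu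
    (subsingleton_penalizedArgmin hΦ hJ hl.1.le ((lt_div_iff₀ hL).1 hl.2))

section Gradient

variable {H : Type*} [NormedAddCommGroup H] [InnerProductSpace ℝ H] {s : Set H}

theorem strongConvexOn_two_norm_sq (hs : Convex ℝ s) : StrongConvexOn s 2 fun u ↦ ‖u‖ ^ 2 := by
  simpa [strongConvexOn_iff_convex] using convexOn_const (0 : ℝ) hs

theorem strongConvexOn_of_forall_add_inner_le (hs : Convex ℝ s) {F : H → ℝ} {G : H → H} {m : ℝ}
    (hG : ∀ u ∈ s, ∀ v ∈ s, F u + ⟪G u, v - u⟫ + m / 2 * ‖v - u‖ ^ 2 ≤ F v) :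
    StrongConvexOn s m F := by
  refine ⟨hs, fun x hx y hy a b ha hb hab ↦ ?_⟩
  set w := a • x + b • y with hw
  have hws : w ∈ s := hs hx hy ha hb hab
  obtain rfl : a = 1 - b := eq_sub_of_add_eq hab
  have hxw : x - w = b • (x - y) := by rw [hw]; module
  have hyw : y - w = -(1 - b) • (x - y) := by rw [hw]; module
  have hFx := mul_le_mul_of_nonneg_left (hG w hws x hx) ha
  have hFy := mul_le_mul_of_nonneg_left (hG w hws y hy) hb
  rw [hxw, inner_smul_right, norm_smul, mul_pow, Real.norm_eq_abs, sq_abs] at hFx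
  rw [hyw, inner_smul_right, norm_smul, mul_pow, Real.norm_eq_abs, sq_abs] at hFy
  simp only [smul_eq_mul]
  linarith

variable [CompleteSpace H]

theorem hasDerivAt_comp_add_smul {F : H → ℝ} {g u d : H} {t : ℝ}
    (h : HasGradientAt F g (u + t • d)) : HasDerivAt (fun τ : ℝ ↦ F (u + τ • d)) ⟪g, d⟫ t := by
  have hline : HasDerivAt (fun τ : ℝ ↦ u + τ • d) d t := by
    simpa using ((hasDerivAt_id t).smul_const d).const_add u
  have hcomp := h.hasFDerivAt.comp_hasDerivAt t hline
  rw [InnerProductSpace.toDual_apply_apply] at hcomp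
  exact hcomp

theorem add_inner_add_mul_sq_norm_le_of_forall_le_inner (hs : Convex ℝ s) {F : H → ℝ} {F' : H → H}
    {m : ℝ} (hF : ∀ u ∈ s, HasGradientAt F (F' u) u)
    (hF' : ∀ u ∈ s, ∀ v ∈ s, m * ‖u - v‖ ^ 2 ≤ ⟪F' u - F' v, u - v⟫) {u v : H} (hu : u ∈ s)
    (hv : v ∈ s) : F u + ⟪F' u, v - u⟫ + m / 2 * ‖v - u‖ ^ 2 ≤ F v := by
  set d := v - u with hd
  let φ : ℝ → ℝ := fun t ↦ F (u + t • d) - (t * ⟪F' u, d⟫ + m / 2 * ‖d‖ ^ 2 * t ^ 2)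
  have hmem : ∀ t ∈ Icc (0 : ℝ) 1, u + t • d ∈ s := fun t ht ↦ hs.add_smul_sub_mem hu hv ht
  have hφ : ∀ t ∈ Icc (0 : ℝ) 1,
      HasDerivAt φ (⟪F' (u + t • d), d⟫ - (⟪F' u, d⟫ + m * ‖d‖ ^ 2 * t)) t := by
    intro t ht
    have hquad := ((hasDerivAt_id t).mul_const ⟪F' u, d⟫).add
      (((hasDerivAt_id t).pow 2).const_mul (m / 2 * ‖d‖ ^ 2))
    refine ((hasDerivAt_comp_add_smul (hF _ (hmem t ht))).sub hquad).congr_deriv ?_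
    simp only [one_mul, Nat.cast_ofNat, id_eq, Nat.add_one_sub_one, pow_one, mul_one, sub_right_inj,
      add_right_inj]
    ring
  have hmono : MonotoneOn φ (Icc 0 1) := by
    refine monotoneOn_of_deriv_nonneg (convex_Icc 0 1)
      (fun t ht ↦ (hφ t ht).continuousAt.continuousWithinAt)
      (fun t ht ↦ (hφ t (interior_subset ht)).differentiableAt.differentiableWithinAt) ?_
    intro t ht
    rw [(hφ t (interior_subset ht)).deriv]
    rw [interior_Icc] at ht
    have h := hF' _ (hmem t (Ioo_subset_Icc_self ht)) u hu
    rw [add_sub_cancel_left, norm_smul, mul_pow, Real.norm_eq_abs, sq_abs, inner_smul_right,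
      inner_sub_left] at h
    refine nonneg_of_mul_nonneg_right ?_ ht.1
    linarith
  have h := hmono (left_mem_Icc.2 zero_le_one) (right_mem_Icc.2 zero_le_one) zero_le_one
  simp only [φ, hd, one_smul, zero_smul, add_zero, add_sub_cancel] at h
  linarith

theorem strongConvexOn_neg_of_lipschitz_gradient (hs : Convex ℝ s) {F : H → ℝ} {F' : H → H}
    {K : ℝ} (hF : ∀ u ∈ s, HasGradientAt F (F' u) u)
    (hK : ∀ u ∈ s, ∀ v ∈ s, ‖F' u - F' v‖ ≤ K * ‖u - v‖) : StrongConvexOn s (-K) F := by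
  refine strongConvexOn_of_forall_add_inner_le hs fun u hu v hv ↦
    add_inner_add_mul_sq_norm_le_of_forall_le_inner hs hF (fun u hu v hv ↦ ?_) hu hv
  have h : |⟪F' u - F' v, u - v⟫| ≤ K * ‖u - v‖ * ‖u - v‖ :=
    (abs_real_inner_le_norm _ _).trans (mul_le_mul_of_nonneg_right (hK u hu v hv) (norm_nonneg _))
  linarith [neg_le_of_abs_le h]

end Gradient

theorem apply_eq_zero_of_isMinOn_submodule {E : Type*} [NormedAddCommGroup E] [NormedSpace ℝ E]
    {V : Submodule ℝ E} {f : E → ℝ} {f' : E →L[ℝ] ℝ} {u v : E} (hf : HasFDerivAt f f' u)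
    (hu : u ∈ V) (hmin : IsMinOn f V u) (hv : v ∈ V) : f' v = 0 := by
  have hV : HasFDerivAt (fun x : V ↦ f x) (f'.comp V.subtypeL) ⟨u, hu⟩ :=
    HasFDerivAt.comp (⟨u, hu⟩ : V) hf V.subtypeL.hasFDerivAt
  have h0 : IsLocalMin (fun x : V ↦ f x) ⟨u, hu⟩ := Eventually.of_forall fun x ↦ hmin x.2
  exact DFunLike.congr_fun (h0.hasFDerivAt_eq_zero hV) (⟨v, hv⟩ : V)

theorem notMem_penalizedArgmin_of_apply_ne_zero {E : Type*} [NormedAddCommGroup E]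
    [NormedSpace ℝ E] {V : Submodule ℝ E} {Φ J : E → ℝ} {Φ' J' : E →L[ℝ] ℝ} {l : ℝ} {u v : E}
    (hΦ : HasFDerivAt Φ Φ' u) (hJ : HasFDerivAt J J' u) (hmin : IsMinOn Φ V u) (hl : l ≠ 0)
    (hv : v ∈ V) (hJv : J' v ≠ 0) : u ∉ penalizedArgmin (V : Set E) Φ J l := by
  rintro ⟨hu, hpen⟩
  have h : Φ' v + l * J' v = 0 :=
    apply_eq_zero_of_isMinOn_submodule (hΦ.add (hJ.const_mul l)) hu hpen hv
  rw [apply_eq_zero_of_isMinOn_submodule hΦ hu hmin hv, zero_add] at h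
  exact mul_ne_zero hl hJv h

theorem abstract_theorem_one
    {H : Type*} [NormedAddCommGroup H] [InnerProductSpace ℝ H] [CompleteSpace H]
    (V : Submodule ℝ H) (hV : IsClosed (V : Set H))
    (I J : H → ℝ) (I' J' : H → H) (ν L : ℝ)
    (hν₀ : 0 ≤ ν) (hν₂ : ν < 2) (hL : 0 < L)
    (hIgrad : ∀ u, HasGradientAt I (I' u) u)
    (hJgrad : ∀ u, HasGradientAt J (J' u) u)
    (hIlip : ∀ u v, ‖I' u - I' v‖ ≤ ν * ‖u - v‖)
    (hJlip : ∀ u v, ‖J' u - J' v‖ ≤ L * ‖u - v‖)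
    (hInonneg : ∀ u, 0 ≤ I u) (hI0 : I 0 = 0)
    (v₀ : H) (hv₀V : v₀ ∈ V) (hv₀ : ⟪J' 0, v₀⟫ ≠ 0)
    (S : Set H)
    (hS : S = {u : H | u ∈ V ∧ ∀ v ∈ V,
      ‖u‖ ^ 2 + I u + ((2 - ν) / L) * J u ≤ ‖v‖ ^ 2 + I v + ((2 - ν) / L) * J v}) :
    (0 : EReal) < ⨅ u ∈ S, ((‖u‖ ^ 2 + I u : ℝ) : EReal) ∧
    ∀ r : ℝ, 0 < r → (r : EReal) < ⨅ u ∈ S, ((‖u‖ ^ 2 + I u : ℝ) : EReal) →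
      ∃! ustar : H, (ustar ∈ V ∧ ‖ustar‖ ^ 2 + I ustar = r) ∧
        ∀ u, u ∈ V ∧ ‖u‖ ^ 2 + I u = r → J ustar ≤ J u := by
  have hVc : Convex ℝ (V : Set H) := V.convex
  have hΦ : StrongConvexOn V (2 - ν) fun u ↦ ‖u‖ ^ 2 + I u :=
    strongConvexOn_add (strongConvexOn_two_norm_sq hVc) (strongConvexOn_neg_of_lipschitz_gradient
      hVc (fun u _ ↦ hIgrad u) fun u _ v _ ↦ hIlip u v)
  have hJ : StrongConvexOn V (-L) J :=
    strongConvexOn_neg_of_lipschitz_gradient hVc (fun u _ ↦ hJgrad u) fun u _ v _ ↦ hJlip u v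
  have hΦd : Differentiable ℝ fun u ↦ ‖u‖ ^ 2 + I u := fun u ↦
    (differentiable_id.norm_sq ℝ u).add (hIgrad u).differentiableAt
  have hJd : Differentiable ℝ J := fun u ↦ (hJgrad u).differentiableAt
  have hΦ0 : ‖(0 : H)‖ ^ 2 + I 0 = 0 := by simp [hI0]
  have hmin : IsMinOn (fun u ↦ ‖u‖ ^ 2 + I u) V 0 := isMinOn_iff.2 fun u _ ↦
    hΦ0.trans_le (add_nonneg (sq_nonneg _) (hInonneg u))
  have h0 : (0 : H) ∉ penalizedArgmin V (fun u ↦ ‖u‖ ^ 2 + I u) J ((2 - ν) / L) :=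
    notMem_penalizedArgmin_of_apply_ne_zero (hΦd 0).hasFDerivAt (hJgrad 0).hasFDerivAt hmin
      (div_pos (sub_pos.2 hν₂) hL).ne' hv₀V (by simpa using hv₀)
  have h := abstract_theorem_one_general hV (sub_pos.2 hν₂) hL hΦ hJ hΦd.continuous.continuousOn
    hJd.continuous.continuousOn V.zero_mem hmin h0
  rw [hΦ0] at h
  rw [hS]
  exact h
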